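/- Let p be a prime, let F be a field containing a primitive p-th root of unity, and let n ≥ 3. Then F^{(n+1)} = F^{(n)}((J̄_n)^{1/p}); that is, F^{(n+1)} is obtained from F^{(n)} by adjoining the p-th roots of all elements θ ∈ (F^{(n)})^× whose p-class [θ] lies in J̄_n. -/

import Mathlib

open IntermediateField

noncomputable section

namespace BKPaper

variable (p : ℕ) (F Fsep : Type) [Field F] [Field Fsep] [Algebra F Fsep]

/-- One step of the filtration tower: the compositum of `E` with all cyclic (i.e. Galois of
degree `p`) extensions of `E` inside `Fsep` that are Galois over `F`. -/
def step (E : IntermediateField F Fsep) : IntermediateField F Fsep :=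
  ⨆ K : Option {K : IntermediateField (↥E) Fsep //
      IsGalois (↥E) ↥K ∧ Module.finrank (↥E) ↥K = p ∧
        IsGalois F ↥(IntermediateField.restrictScalars F K)},
    K.elim E fun K => IntermediateField.restrictScalars F (K : IntermediateField (↥E) Fsep)

/-- The filtration tower `F = F⁽¹⁾ ⊆ F⁽²⁾ ⊆ ⋯` of the paper:  `F⁽²⁾` is the compositum of all
cyclic degree-`p` extensions of `F`, and for `n ≥ 2`, `F⁽ⁿ⁺¹⁾` is the compositum of all cyclic
degree-`p` extensions of `F⁽ⁿ⁾` that are Galois over `F`. -/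
def filtration : ℕ → IntermediateField F Fsep
  | 0 => ⊥
  | 1 => ⊥
  | (n + 2) => step p F Fsep (filtration (n + 1))

theorem normal_step (E : IntermediateField F Fsep) [hE : Normal F ↥E] :
    Normal F ↥(step p F Fsep E) := by
  have h : ∀ K : Option {K : IntermediateField (↥E) Fsep //
      IsGalois (↥E) ↥K ∧ Module.finrank (↥E) ↥K = p ∧
        IsGalois F ↥(IntermediateField.restrictScalars F K)},
      Normal F ↥(K.elim E fun K =>
        IntermediateField.restrictScalars F (K : IntermediateField (↥E) Fsep)) := by
    rintro (_ | K)
    · exact hE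
    · exact K.2.2.2.to_normal
  exact IntermediateField.normal_iSup (h := h)

instance normal_filtration : ∀ n : ℕ, Normal F ↥(filtration p F Fsep n)
  | 0 => inferInstanceAs (Normal F ↥(⊥ : IntermediateField F Fsep))
  | 1 => inferInstanceAs (Normal F ↥(⊥ : IntermediateField F Fsep))
  | (n + 2) => by
      have := normal_filtration (n + 1)
      exact normal_step p F Fsep (filtration p F Fsep (n + 1))

theorem le_step (E : IntermediateField F Fsep) : E ≤ step p F Fsep E :=
  le_iSup_of_le (Option.none) (le_refl E)

variable {F Fsep}

/-- The restriction map `Gal(L/F) → Gal(E/F)` for nested Galois extensions `E ≤ L`. -/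
def galRes {E L : IntermediateField F Fsep} (h : E ≤ L) [Normal F ↥E] :
    (↥L ≃ₐ[F] ↥L) →* (↥E ≃ₐ[F] ↥E) :=
  letI : Algebra ↥E ↥L := (IntermediateField.inclusion h).toRingHom.toAlgebra
  letI : IsScalarTower F ↥E ↥L := IsScalarTower.of_algebraMap_eq fun _ => rfl
  AlgEquiv.restrictNormalHom ↥E

/-- The restriction map `Gal(Fsep/F) → Gal(E/F)`. -/
def galResTop (E : IntermediateField F Fsep) [Normal F ↥E] :
    (Fsep ≃ₐ[F] Fsep) →* (↥E ≃ₐ[F] ↥E) :=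
  AlgEquiv.restrictNormalHom ↥E

end BKPaper

namespace BKPaper

theorem filtration_le_succ (p : ℕ) (F Fsep : Type) [Field F] [Field Fsep] [Algebra F Fsep] :
    ∀ n : ℕ, filtration p F Fsep n ≤ filtration p F Fsep (n + 1)
  | 0 => bot_le
  | 1 => bot_le
  | (n + 2) => le_step p F Fsep (filtration p F Fsep (n + 2))

end BKPaper

open BKPaper

/-!
Let `θ` be a nonzero element of `E = F⁽ⁿ⁾` and `x ^ p = θ`. By Kummer theory over `E`, the
degree-`p` steps of the tower are the fields `E(x)` with `x ∉ E`, so the theorem asserts that `E(x)`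
is normal over `F` exactly when the `p`-class of `θ` is invariant. If `σ` is an automorphism of
`Fsep` with `σ E(x) = E(x)`, then `σ x = x ^ i * u` for some `i` and some `u ∈ E`, and the point is
that `i` may be taken to be `1`. Every element of the tower is fixed by some `σ ^ p ^ k`, because
adjoining a `p`-th root costs at most one more factor `p`. Comparing `x = σ ^ p ^ k x` with `σ x`
modulo `E` gives `x ≡ x ^ i ^ p ^ k ≡ x ^ i ≡ σ x`, the middle step being Fermat's little theorem.
-/

namespace BKPaper

open Polynomial

section Kummer

variable {K L : Type*} [Field K] [Field L] [Algebra K L] {n : ℕ}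

theorem exists_eq_pow_mul_of_pow_eq_pow {R : Type*} [CommRing R] [IsDomain R] [NeZero n] {ζ : R}
    (hζ : IsPrimitiveRoot ζ n) {x y : R} (h : y ^ n = x ^ n) : ∃ j : ℕ, y = ζ ^ j * x := by
  have hy : y ∈ nthRoots n (x ^ n) := (mem_nthRoots (NeZero.pos n)).2 h
  rw [hζ.nthRoots_eq rfl, Multiset.mem_map] at hy
  obtain ⟨j, -, hj⟩ := hy
  exact ⟨j, hj.symm⟩

theorem irreducible_X_pow_sub_C_of_notMem_range {p : ℕ} [hp : Fact p.Prime] {ζ : K}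
    (hζ : IsPrimitiveRoot ζ p) {a : K} {x : L} (hxa : x ^ p = algebraMap K L a)
    (hx : x ∉ Set.range (algebraMap K L)) : Irreducible (X ^ p - C a) := by
  refine X_pow_sub_C_irreducible_of_prime hp.out fun b hb => hx ?_
  obtain ⟨j, hj⟩ := exists_eq_pow_mul_of_pow_eq_pow
    (hζ.map_of_injective (algebraMap K L).injective) (x := algebraMap K L b) (y := x)
    (by rw [hxa, ← hb, map_pow])
  exact ⟨ζ ^ j * b, by rw [hj, map_mul, map_pow]⟩

section Irreducible

variable [NeZero n] {a : K} (ha : Irreducible (X ^ n - C a)) {x : L}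
  (hx : x ^ n = algebraMap K L a)

include ha hx

theorem finrank_adjoin_simple_of_irreducible_X_pow_sub_C : Module.finrank K K⟮x⟯ = n := by
  have hmonic : (X ^ n - C a).Monic := monic_X_pow_sub_C a (NeZero.ne n)
  have hroot : aeval x (X ^ n - C a) = 0 := by simp [hx]
  rw [adjoin.finrank ⟨_, hmonic, hroot⟩, ← minpoly.eq_of_irreducible_of_monic ha hroot hmonic,
    natDegree_X_pow_sub_C]

theorem isSplittingField_adjoin_simple_X_pow_sub_C {ζ : K} (hζ : IsPrimitiveRoot ζ n) :
    IsSplittingField K K⟮x⟯ (X ^ n - C a) := by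
  have hfinrank := finrank_adjoin_simple_of_irreducible_X_pow_sub_C ha hx
  have : FiniteDimensional K K⟮x⟯ :=
    Module.finite_of_finrank_pos (hfinrank ▸ NeZero.pos n)
  have hgen : AdjoinSimple.gen K x ^ Module.finrank K K⟮x⟯ = algebraMap K K⟮x⟯ a :=
    Subtype.ext (by rw [hfinrank]; exact hx)
  have hroots : (primitiveRoots (Module.finrank K K⟮x⟯) K).Nonempty :=
    ⟨ζ, (mem_primitiveRoots Module.finrank_pos).2 (hfinrank.symm ▸ hζ)⟩
  have htop : K⟮AdjoinSimple.gen K x⟯ = ⊤ :=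
    lift_injective _ (by rw [lift_adjoin_simple, lift_top, AdjoinSimple.coe_gen])
  simpa only [hfinrank] using isSplittingField_X_pow_sub_C_of_root_adjoin_eq_top hroots hgen htop

theorem exists_generator_apply_eq_mul {ζ : K} (hζ : IsPrimitiveRoot ζ n)
    [IsSplittingField K L (X ^ n - C a)] :
    ∃ σ : Gal(L/K), (∀ τ, τ ∈ Subgroup.zpowers σ) ∧ σ x = algebraMap K L ζ * x := by
  let e := autEquivZmod ha L hζ
  refine ⟨e.symm (Multiplicative.ofAdd 1), fun τ => ?_, ?_⟩
  · obtain ⟨m, hm⟩ := ZMod.intCast_surjective (Multiplicative.toAdd (e τ))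
    refine ⟨m, e.injective ?_⟩
    simp [← ofAdd_zsmul, hm]
  · simpa [Algebra.smul_def] using autEquivZmod_symm_apply_natCast ha L hx hζ 1

theorem exists_eq_pow_mul_of_isSplittingField_X_pow_sub_C {ζ : K} (hζ : IsPrimitiveRoot ζ n)
    [IsSplittingField K L (X ^ n - C a)] {y : L} (hy : y ^ n ∈ Set.range (algebraMap K L)) :
    ∃ (i : ℕ) (u : K), y = x ^ i * algebraMap K L u := by
  have hroots : (primitiveRoots n K).Nonempty := ⟨ζ, (mem_primitiveRoots (NeZero.pos n)).2 hζ⟩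
  have : FiniteDimensional K L := IsSplittingField.finiteDimensional L (X ^ n - C a)
  have : IsGalois K L := isGalois_of_isSplittingField_X_pow_sub_C hroots ha L
  obtain ⟨b, hb⟩ := hy
  rcases eq_or_ne n 1 with rfl | hn
  · exact ⟨0, b, by rw [hb, pow_zero, pow_one, one_mul]⟩
  have hx0 : x ≠ 0 := by
    rintro rfl
    refine ne_zero_of_irreducible_X_pow_sub_C' hn ha ((algebraMap K L).injective ?_)
    rw [← hx, zero_pow (NeZero.ne n), map_zero]
  obtain ⟨σ, hgen, hσx⟩ := exists_generator_apply_eq_mul ha hx hζ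
  obtain ⟨i, hσy⟩ := exists_eq_pow_mul_of_pow_eq_pow
    (hζ.map_of_injective (algebraMap K L).injective) (x := y) (y := σ y)
    (by rw [← map_pow, ← hb, AlgEquiv.commutes])
  have hfixed : σ ∈ MulAction.stabilizer Gal(L/K) (y / x ^ i) := by
    have hζ0 : algebraMap K L ζ ≠ 0 := by simpa using hζ.ne_zero (NeZero.ne n)
    rw [MulAction.mem_stabilizer_iff, AlgEquiv.smul_def, map_div₀, map_pow, hσx, hσy, mul_pow,
      mul_div_mul_left _ _ (pow_ne_zero i hζ0)]
  obtain ⟨u, hu⟩ := (IsGalois.mem_range_algebraMap_iff_fixed (y / x ^ i)).2 fun τ =>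
    Subgroup.zpowers_le.2 hfixed (hgen τ)
  exact ⟨i, u, by rw [hu, mul_div_cancel₀ _ (pow_ne_zero i hx0)]⟩

theorem exists_eq_pow_mul_of_mem_adjoin_simple {ζ : K} (hζ : IsPrimitiveRoot ζ n) {y : L}
    (hyx : y ∈ K⟮x⟯) (hy : y ^ n ∈ Set.range (algebraMap K L)) :
    ∃ (i : ℕ) (u : K), y = x ^ i * algebraMap K L u := by
  have := isSplittingField_adjoin_simple_X_pow_sub_C ha hx hζ
  obtain ⟨b, hb⟩ := hy
  obtain ⟨i, u, hu⟩ := exists_eq_pow_mul_of_isSplittingField_X_pow_sub_C ha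
    (x := AdjoinSimple.gen K x) (Subtype.ext hx) hζ (y := ⟨y, hyx⟩) ⟨b, Subtype.ext hb⟩
  exact ⟨i, u, congrArg Subtype.val hu⟩

end Irreducible

theorem exists_adjoin_simple_eq_of_finrank_eq_prime {p : ℕ} [hp : Fact p.Prime] {ζ : K}
    (hζ : IsPrimitiveRoot ζ p) {M : IntermediateField K L} [IsGalois K M]
    (hM : Module.finrank K M = p) : ∃ x : L, x ^ p ∈ Set.range (algebraMap K L) ∧ K⟮x⟯ = M := by
  have : FiniteDimensional K M := Module.finite_of_finrank_pos (hM ▸ hp.out.pos)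
  have : IsCyclic Gal(M/K) := isCyclic_of_prime_card ((IsGalois.card_aut_eq_finrank K M).trans hM)
  obtain ⟨x, ⟨a, ha⟩, hx⟩ := exists_root_adjoin_eq_top_of_isCyclic K M
    ⟨ζ, (mem_primitiveRoots Module.finrank_pos).2 (hM.symm ▸ hζ)⟩
  rw [hM] at ha
  refine ⟨x, ⟨a, congrArg Subtype.val ha⟩, ?_⟩
  rw [← lift_adjoin_simple, hx, lift_top]

end Kummer

theorem exists_iterate_eq_pow_mul {M : Type*} [CommMonoid M] {S : Submonoid M} {φ : M →* M}
    (hφ : ∀ s ∈ S, φ s ∈ S) {x u : M} {i : ℕ} (hu : u ∈ S) (hx : φ x = x ^ i * u) (m : ℕ) :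
    ∃ v ∈ S, φ^[m] x = x ^ i ^ m * v := by
  induction m with
  | zero => exact ⟨1, S.one_mem, by simp⟩
  | succ m ih =>
    obtain ⟨v, hv, hxv⟩ := ih
    refine ⟨u ^ i ^ m * φ v, S.mul_mem (S.pow_mem hu _) (hφ v hv), ?_⟩
    rw [Function.iterate_succ_apply', hxv, map_mul, map_pow, hx, mul_pow, ← pow_mul, ← pow_succ',
      mul_assoc]

section GaloisAction

variable {F L : Type*} [Field F] [Field L] [Algebra F L] {p : ℕ}

/-- The union over `k` of the fixed fields of `σ ^ p ^ k`. For `L` normal over `F` and a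
Galois subextension `E`, containment of `E` in it for every `σ` says that `Gal(E/F)` is pro-`p`;
this form only involves one automorphism and one element at a time. -/
def pPowFixedField (p : ℕ) (σ : L ≃ₐ[F] L) : IntermediateField F L :=
  ⨆ k : ℕ, fixedField (Subgroup.zpowers (σ ^ p ^ k))

theorem mem_fixedField_zpowers {σ : L ≃ₐ[F] L} {x : L} :
    x ∈ fixedField (Subgroup.zpowers σ) ↔ σ x = x := by
  rw [mem_fixedField_iff]
  exact Subgroup.zpowers_le (H := MulAction.stabilizer (L ≃ₐ[F] L) x)

theorem mem_pPowFixedField {σ : L ≃ₐ[F] L} {x : L} :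
    x ∈ pPowFixedField p σ ↔ ∃ k : ℕ, (σ ^ p ^ k) x = x := by
  have hmono : Monotone fun k => fixedField (Subgroup.zpowers (σ ^ p ^ k)) := fun k l hkl =>
    fixedField_antitone <| Subgroup.zpowers_le.2 <| by
      obtain ⟨d, rfl⟩ := Nat.exists_eq_add_of_le hkl
      rw [pow_add, pow_mul]
      exact Subgroup.npow_mem_zpowers _ _
  rw [pPowFixedField, ← SetLike.mem_coe, coe_iSup_of_directed hmono.directed_le, Set.mem_iUnion]
  exact exists_congr fun k => mem_fixedField_zpowers

theorem mem_pPowFixedField_of_pow_mem [NeZero p] {ζ : F} (hζ : IsPrimitiveRoot ζ p)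
    {σ : L ≃ₐ[F] L} {x : L} (hx : x ^ p ∈ pPowFixedField p σ) : x ∈ pPowFixedField p σ := by
  obtain ⟨k, hk⟩ := mem_pPowFixedField.1 hx
  obtain ⟨j, hj⟩ := exists_eq_pow_mul_of_pow_eq_pow
    (hζ.map_of_injective (algebraMap F L).injective) ((map_pow _ x p).symm.trans hk)
  have hpow : ∀ m : ℕ, ((σ ^ p ^ k) ^ m) x = algebraMap F L ((ζ ^ j) ^ m) * x := by
    intro m
    induction m with
    | zero => simp
    | succ m ih =>
      rw [pow_succ', AlgEquiv.mul_apply, ih, map_mul, AlgEquiv.commutes, hj, ← map_pow, ← mul_assoc,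
        ← map_mul, ← pow_succ]
  refine mem_pPowFixedField.2 ⟨k + 1, ?_⟩
  rw [pow_succ, pow_mul, hpow, pow_right_comm, hζ.pow_eq_one, one_pow, map_one, one_mul]

variable {E : IntermediateField F L}

theorem apply_mem_of_normal [Normal F E] (σ : L ≃ₐ[F] L) {x : L} (hx : x ∈ E) : σ x ∈ E := by
  have hσ : (σ.restrictNormal E ⟨x, hx⟩ : L) = σ x := σ.restrictNormal_commutes E ⟨x, hx⟩
  exact hσ ▸ SetLike.coe_mem _

theorem restrictScalars_adjoin_simple_le {M : IntermediateField F L} (hE : E ≤ M) {x : L}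
    (hx : x ∈ M) : restrictScalars F E⟮x⟯ ≤ M := by
  rw [restrictScalars_adjoin, adjoin_le_iff]
  exact Set.union_subset hE (Set.singleton_subset_iff.2 hx)

theorem normal_restrictScalars_adjoin_simple_iff [Normal F L] [Normal F E] {x : L} :
    Normal F (restrictScalars F E⟮x⟯) ↔ ∀ σ : L ≃ₐ[F] L, σ x ∈ E⟮x⟯ := by
  constructor
  · intro _ σ
    have hx : x ∈ restrictScalars F E⟮x⟯ := mem_adjoin_simple_self E x
    exact apply_mem_of_normal σ hx
  · intro h
    refine normal_iff_forall_map_le'.2 fun σ => ?_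
    rw [map_le_iff_le_comap]
    refine restrictScalars_adjoin_simple_le (fun y hy => ?_) (h σ)
    exact E⟮x⟯.algebraMap_mem ⟨σ y, apply_mem_of_normal σ hy⟩

theorem exists_apply_eq_mul_iff [NeZero p] {ζ : F} (hζ : IsPrimitiveRoot ζ p) {σ : L ≃ₐ[F] L}
    {x : L} : (∃ u ∈ E, σ x = x * u) ↔ ∃ u ∈ E, σ (x ^ p) = x ^ p * u ^ p := by
  constructor
  · rintro ⟨u, hu, hσ⟩
    exact ⟨u, hu, by rw [map_pow, hσ, mul_pow]⟩
  · rintro ⟨u, hu, hσ⟩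
    obtain ⟨j, hj⟩ := exists_eq_pow_mul_of_pow_eq_pow
      (hζ.map_of_injective (algebraMap F L).injective) (x := x * u) (y := σ x)
      (by rw [← map_pow, hσ, mul_pow])
    exact ⟨algebraMap F L ζ ^ j * u, mul_mem (pow_mem (E.algebraMap_mem ζ) j) hu,
      by rw [hj, mul_left_comm]⟩

theorem exists_apply_eq_mul_of_apply_eq_pow_mul [hp : Fact p.Prime] [Normal F E]
    {σ : L ≃ₐ[F] L} {x u : L} {i : ℕ} (hx : x ∈ pPowFixedField p σ) (hxp : x ^ p ∈ E)
    (hu : u ∈ E) (hσ : σ x = x ^ i * u) : ∃ w ∈ E, σ x = x * w := by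
  rcases eq_or_ne x 0 with rfl | hx0
  · exact ⟨1, one_mem E, by simp⟩
  obtain ⟨k, hk⟩ := mem_pPowFixedField.1 hx
  obtain ⟨v, hv, hxv⟩ := exists_iterate_eq_pow_mul (S := E.toSubalgebra.toSubmonoid)
    (φ := (σ : L →* L)) (fun _ hs => apply_mem_of_normal σ hs) hu hσ (p ^ k)
  rw [AlgEquiv.coe_pow] at hk
  replace hxv : x = x ^ i ^ p ^ k * v := hk.symm.trans hxv
  have hmod : i ≡ i ^ p ^ k [MOD p] := by
    rw [← ZMod.natCast_eq_natCast_iff, Nat.cast_pow, ZMod.pow_card_pow]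
  have hle : i ≤ i ^ p ^ k := Nat.le_self_pow (pow_ne_zero k hp.out.ne_zero) i
  obtain ⟨c, hc⟩ := (Nat.modEq_iff_dvd' hle).1 hmod
  have hw : (x ^ p) ^ c * v ∈ E := mul_mem (pow_mem hxp c) hv
  have hxw : x = x ^ i * ((x ^ p) ^ c * v) := by
    rw [← mul_assoc, ← pow_mul, ← pow_add, ← hc, Nat.add_sub_cancel' hle, ← hxv]
  have hw0 : (x ^ p) ^ c * v ≠ 0 := fun h => hx0 (by rw [hxw, h, mul_zero])
  refine ⟨u / ((x ^ p) ^ c * v), div_mem hu hw, ?_⟩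
  rw [hσ, mul_div_assoc', eq_div_iff hw0, mul_right_comm, ← hxw]

theorem apply_mem_adjoin_simple_iff [Fact p.Prime] [Normal F E] {ζ : F}
    (hζ : IsPrimitiveRoot ζ p) {σ : L ≃ₐ[F] L} (hE : E ≤ pPowFixedField p σ) {x : L}
    (hxp : x ^ p ∈ E) : σ x ∈ E⟮x⟯ ↔ ∃ u ∈ E, σ x = x * u := by
  have hxE : x ∈ E⟮x⟯ := mem_adjoin_simple_self E x
  refine ⟨fun hσ => ?_, ?_⟩
  swap
  · rintro ⟨u, hu, hσ⟩
    rw [hσ]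
    exact mul_mem hxE (E⟮x⟯.algebraMap_mem ⟨u, hu⟩)
  have hζE : IsPrimitiveRoot (algebraMap F E ζ) p :=
    hζ.map_of_injective (algebraMap F E).injective
  obtain ⟨i, u, hu⟩ : ∃ (i : ℕ) (u : E), σ x = x ^ i * u := by
    by_cases hx : x ∈ Set.range (algebraMap E L)
    · obtain ⟨x, rfl⟩ := hx
      exact ⟨0, ⟨σ x, apply_mem_of_normal σ x.2⟩, by simp⟩
    · have hxa : x ^ p = algebraMap E L ⟨x ^ p, hxp⟩ := rfl
      refine exists_eq_pow_mul_of_mem_adjoin_simple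
        (irreducible_X_pow_sub_C_of_notMem_range hζE hxa hx) hxa hζE hσ ?_
      exact ⟨⟨σ x ^ p, map_pow σ x p ▸ apply_mem_of_normal σ hxp⟩, rfl⟩
  exact exists_apply_eq_mul_of_apply_eq_pow_mul (mem_pPowFixedField_of_pow_mem hζ (hE hxp)) hxp
    u.2 hu

end GaloisAction

/-- The `p`-class of `θ` is fixed by `Gal(E/F)`: for `θ ≠ 0` this says `[θ] ∈ J̄`, where
`J = Eˣ / (Eˣ) ^ p`, written out without passing to the quotient. It also holds for `θ = 0`. -/
def IsInvariantPClass (p : ℕ) (F : Type*) {E : Type*} [Field F] [Field E] [Algebra F E] (θ : E) :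
    Prop :=
  ∀ σ : E ≃ₐ[F] E, ∃ u : E, σ θ = θ * u ^ p

theorem isInvariantPClass_iff {F L : Type*} [Field F] [Field L] [Algebra F L] [Normal F L] {p : ℕ}
    {E : IntermediateField F L} [Normal F E] {θ : E} :
    IsInvariantPClass p F θ ↔ ∀ σ : L ≃ₐ[F] L, ∃ u ∈ E, σ θ = θ * u ^ p := by
  rw [IsInvariantPClass, (AlgEquiv.restrictNormalHom_surjective L).forall]
  refine forall_congr' fun σ => ?_
  have hσ : ((AlgEquiv.restrictNormalHom E σ θ : E) : L) = σ θ := σ.restrictNormal_commutes E θ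
  simp [← hσ, Subtype.ext_iff]

theorem normal_restrictScalars_adjoin_simple_iff_isInvariantPClass {F L : Type*} [Field F]
    [Field L] [Algebra F L] [Normal F L] {p : ℕ} [Fact p.Prime] {ζ : F}
    (hζ : IsPrimitiveRoot ζ p) {E : IntermediateField F L} [Normal F E]
    (hE : ∀ σ : L ≃ₐ[F] L, E ≤ pPowFixedField p σ) {x : L} {θ : E} (hxθ : x ^ p = θ) :
    Normal F (restrictScalars F E⟮x⟯) ↔ IsInvariantPClass p F θ := by
  have hxp : x ^ p ∈ E := hxθ ▸ θ.2
  rw [normal_restrictScalars_adjoin_simple_iff, isInvariantPClass_iff]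
  refine forall_congr' fun σ => ?_
  rw [apply_mem_adjoin_simple_iff hζ (hE σ) hxp, exists_apply_eq_mul_iff hζ, hxθ]

section Tower

variable {p : ℕ} [hp : Fact p.Prime] {F L : Type} [Field F] [Field L] [Algebra F L]
  {E : IntermediateField F L}

theorem step_le {ζ : E} (hζ : IsPrimitiveRoot ζ p) {M : IntermediateField F L} (hE : E ≤ M)
    (h : ∀ x : L, x ^ p ∈ E → Normal F (restrictScalars F E⟮x⟯) → x ∈ M) : step p F L E ≤ M := by
  refine iSup_le ?_
  rintro (_ | ⟨K, hK, hfinrank, hnormal⟩)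
  · exact hE
  · obtain ⟨x, ⟨a, ha⟩, rfl⟩ := exists_adjoin_simple_eq_of_finrank_eq_prime hζ hfinrank
    exact restrictScalars_adjoin_simple_le hE (h x (ha ▸ a.2) hnormal.to_normal)

theorem mem_step [Algebra.IsSeparable F L] {ζ : E} (hζ : IsPrimitiveRoot ζ p) {x : L}
    (hxp : x ^ p ∈ E) (hnormal : Normal F (restrictScalars F E⟮x⟯)) : x ∈ step p F L E := by
  by_cases hx : x ∈ Set.range (algebraMap E L)
  · obtain ⟨x, rfl⟩ := hx
    exact le_step p F L E x.2
  have hxa : x ^ p = algebraMap E L ⟨x ^ p, hxp⟩ := rfl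
  have hirr := irreducible_X_pow_sub_C_of_notMem_range hζ hxa hx
  have := isSplittingField_adjoin_simple_X_pow_sub_C hirr hxa hζ
  have hGalois : IsGalois E E⟮x⟯ := isGalois_of_isSplittingField_X_pow_sub_C
    ⟨ζ, (mem_primitiveRoots hp.out.pos).2 hζ⟩ hirr E⟮x⟯
  exact le_iSup (fun K : Option {K : IntermediateField E L // IsGalois E K ∧
      Module.finrank E K = p ∧ IsGalois F (restrictScalars F K)} =>
      K.elim E fun K => restrictScalars F K.1)
    (some ⟨E⟮x⟯, hGalois, finrank_adjoin_simple_of_irreducible_X_pow_sub_C hirr hxa,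
      { to_normal := hnormal }⟩)
    (mem_adjoin_simple_self E x)

theorem filtration_le_pPowFixedField {ζ : F} (hζ : IsPrimitiveRoot ζ p) (σ : L ≃ₐ[F] L) :
    ∀ n : ℕ, filtration p F L n ≤ pPowFixedField p σ
  | 0 => bot_le
  | 1 => bot_le
  | n + 2 =>
    have ih := filtration_le_pPowFixedField hζ σ (n + 1)
    step_le (hζ.map_of_injective (algebraMap F (filtration p F L (n + 1))).injective) ih
      fun _ hx _ => mem_pPowFixedField_of_pow_mem hζ (ih hx)

theorem step_eq_adjoin_isInvariantPClass [IsGalois F L] {ζ : F} (hζ : IsPrimitiveRoot ζ p)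
    [Normal F E] (hE : ∀ σ : L ≃ₐ[F] L, E ≤ pPowFixedField p σ) :
    step p F L E = adjoin F ((E : Set L) ∪
      {x : L | ∃ θ : E, θ ≠ 0 ∧ IsInvariantPClass p F θ ∧ x ^ p = (θ : L)}) := by
  have hζE : IsPrimitiveRoot (algebraMap F E ζ) p :=
    hζ.map_of_injective (algebraMap F E).injective
  apply le_antisymm
  · refine step_le hζE (fun y hy => subset_adjoin F _ (Or.inl hy)) fun x hxp hnormal => ?_
    apply subset_adjoin
    rcases eq_or_ne x 0 with rfl | hx0
    · exact Or.inl (zero_mem E)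
    · exact Or.inr ⟨⟨x ^ p, hxp⟩, fun h => pow_ne_zero p hx0 (congrArg Subtype.val h),
        (normal_restrictScalars_adjoin_simple_iff_isInvariantPClass hζ hE rfl).1 hnormal, rfl⟩
  · rw [adjoin_le_iff]
    rintro x (hx | ⟨θ, -, hθ, hxθ⟩)
    · exact le_step p F L E hx
    · exact mem_step hζE (hxθ ▸ θ.2)
        ((normal_restrictScalars_adjoin_simple_iff_isInvariantPClass hζ hE hxθ).2 hθ)

end Tower

end BKPaper

theorem stmt13_general (p : ℕ) [Fact p.Prime] (F L : Type) [Field F] [Field L] [Algebra F L]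
    [IsGalois F L] (hζ : ∃ ζ : F, IsPrimitiveRoot ζ p) (n : ℕ) (hn : 1 ≤ n) :
    filtration p F L (n + 1) =
      adjoin F ((filtration p F L n : Set L) ∪
        {x : L | ∃ θ : filtration p F L n, θ ≠ 0 ∧ IsInvariantPClass p F θ ∧ x ^ p = (θ : L)}) := by
  obtain ⟨ζ, hζ⟩ := hζ
  obtain ⟨m, rfl⟩ := Nat.exists_eq_add_of_le' hn
  exact step_eq_adjoin_isInvariantPClass hζ fun σ => filtration_le_pPowFixedField hζ σ _

theorem stmt13 (p : ℕ) [Fact p.Prime] (F Fsep : Type) [Field F] [Field Fsep]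
    [Algebra F Fsep] [IsSepClosure F Fsep] (hζ : ∃ ζ : F, IsPrimitiveRoot ζ p)
    (n : ℕ) (hn : 3 ≤ n) :
    filtration p F Fsep (n + 1) =
      IntermediateField.adjoin F ((filtration p F Fsep n : Set Fsep) ∪
        {x : Fsep | ∃ θ : ↥(filtration p F Fsep n), θ ≠ 0 ∧
          (∀ σ : ↥(filtration p F Fsep n) ≃ₐ[F] ↥(filtration p F Fsep n),
            ∃ u : ↥(filtration p F Fsep n), σ θ = θ * u ^ p) ∧
          x ^ p = (θ : Fsep)}) := by
  exact stmt13_general p F Fsep hζ n (by omega)
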